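/- arXiv:2302.11073 — 2 statements merged into one kernel-verified Lean document; each statement's English description precedes it below -/
import Mathlib

section
/- Let γ > 0 be a real number and let z be a complex number with Re z > 0 and Im z > 0. Then the imaginary part of (deriv Γ_ℂ)(z+γ)/Γ_ℂ(z+γ) − (deriv Γ_ℂ)(z)/Γ_ℂ(z) is strictly negative. -/
/-!
Euler's limit formula `Γ s = lim n ^ s * n! / (s * (s + 1) * ⋯ * (s + n))` may be differentiated
logarithmically, by dominated convergence in Cauchy's formula for the derivative, so that
`ψ s = lim (log n - ∑ j ≤ n, 1 / (s + j))`. Hence `Im (ψ (z + γ) - ψ z)` is a limit of sums of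
`Im (1 / (z + j) - 1 / (z + γ + j))`. As `z + j` and `z + γ + j` have the same positive imaginary
part, each of these is negative as soon as `|z + j| < |z + γ + j|`, which holds for every `j ≥ 0`
when `-γ < 2 Re z`.
-/

open Complex Filter Metric Topology

section CauchyFormula

variable {E ι : Type*} [NormedAddCommGroup E] [NormedSpace ℂ E]
  {l : Filter ι} [l.IsCountablyGenerated] {F : ι → ℂ → E} {f : ℂ → E} {bound : ℂ → ℝ}

theorem tendsto_circleIntegral_of_dominated {c : ℂ} {R : ℝ}
    (hF : ∀ᶠ i in l, CircleIntegrable (F i) c R)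
    (hF_le : ∀ᶠ i in l, ∀ w ∈ sphere c |R|, ‖F i w‖ ≤ bound w)
    (hbound : CircleIntegrable bound c R)
    (hlim : ∀ w ∈ sphere c |R|, Tendsto (F · w) l (𝓝 (f w))) :
    Tendsto (fun i ↦ ∮ w in C(c, R), F i w) l (𝓝 (∮ w in C(c, R), f w)) := by
  refine intervalIntegral.tendsto_integral_filter_of_dominated_convergence
    (fun θ ↦ |R| * bound (circleMap c R θ)) ?_ ?_ (hbound.const_mul |R|) ?_
  · filter_upwards [hF] with i hi
    exact hi.out.def'.aestronglyMeasurable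
  · filter_upwards [hF_le] with i hi
    refine .of_forall fun θ _ ↦ ?_
    rw [norm_smul, deriv_circleMap, norm_mul, norm_circleMap_zero, norm_I, mul_one]
    gcongr
    exact hi _ (circleMap_mem_sphere' c R θ)
  · exact .of_forall fun θ _ ↦ (hlim _ (circleMap_mem_sphere' c R θ)).const_smul _

theorem tendsto_deriv_of_dominated_on_sphere [CompleteSpace E] {U : Set ℂ} {z : ℂ} {r : ℝ}
    (hU : IsOpen U) (hr : 0 < r) (hzr : closedBall z r ⊆ U)
    (hF : ∀ᶠ i in l, DifferentiableOn ℂ (F i) U) (hf : DifferentiableOn ℂ f U)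
    (hF_le : ∀ᶠ i in l, ∀ w ∈ sphere z r, ‖F i w‖ ≤ bound w)
    (hbound : CircleIntegrable bound z r)
    (hlim : ∀ w ∈ sphere z r, Tendsto (F · w) l (𝓝 (f w))) :
    Tendsto (fun i ↦ deriv (F i) z) l (𝓝 (deriv f z)) := by
  have hsphere : sphere z |r| = sphere z r := by rw [abs_of_pos hr]
  have hne : ∀ w ∈ sphere z r, (w - z) ^ 2 ≠ 0 := fun w hw ↦
    pow_ne_zero 2 (sub_ne_zero.mpr (ne_of_mem_sphere hw hr.ne'))
  have hcauchy : Tendsto (fun i ↦ cderiv r (F i) z) l (𝓝 (cderiv r f z)) := by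
    refine (tendsto_circleIntegral_of_dominated (bound := (r ^ 2)⁻¹ • bound)
      ?_ ?_ hbound.const_smul ?_).const_smul _
    · filter_upwards [hF] with i hi
      have hcont : ContinuousOn (F i) (sphere z r) :=
        hi.continuousOn.mono (sphere_subset_closedBall.trans hzr)
      exact (ContinuousOn.smul (ContinuousOn.inv₀ (by fun_prop) hne) hcont).circleIntegrable hr.le
    · filter_upwards [hF_le] with i hi w hw
      rw [hsphere] at hw
      rw [norm_smul, norm_inv, norm_pow, mem_sphere_iff_norm.mp hw, Pi.smul_apply, smul_eq_mul]
      gcongr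
      exact hi w hw
    · rw [hsphere]
      exact fun w hw ↦ (hlim w hw).const_smul _
  rw [← cderiv_eq_deriv hU hf hr hzr]
  refine hcauchy.congr' ?_
  filter_upwards [hF] with i hi using cderiv_eq_deriv hU hi hr hzr

end CauchyFormula

section EulerSequence

variable {s : ℂ} {n : ℕ}

theorem ne_neg_natCast_of_re_pos (hs : 0 < s.re) (m : ℕ) : s ≠ -m := by
  rintro rfl
  rw [neg_re, natCast_re, Left.neg_pos_iff] at hs
  exact hs.not_ge m.cast_nonneg

theorem realGammaSeq_le_Gamma {x : ℝ} (hx : 0 < x) (hn : n ≠ 0) :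
    Real.GammaSeq x n ≤ Real.Gamma x := by
  have hfactor : ∀ j ∈ Finset.range (n + 1), x + j ≠ 0 := fun j _ ↦ by positivity
  have hpos : 0 < Real.GammaSeq x n := by unfold Real.GammaSeq; positivity
  have hlog : Real.log (Real.GammaSeq x n) = Real.BohrMollerup.logGammaSeq x n := by
    rw [Real.GammaSeq, Real.BohrMollerup.logGammaSeq,
      Real.log_div (by positivity) (Finset.prod_ne_zero_iff.mpr hfactor),
      Real.log_mul (by positivity) (by positivity), Real.log_rpow (by positivity),
      Real.log_prod hfactor]
  rw [← Real.log_le_log_iff hpos (Real.Gamma_pos_of_pos hx), hlog]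
  simpa using Real.BohrMollerup.ge_logGammaSeq Real.convexOn_log_Gamma
    (fun {y} hy ↦ by
      simp [Real.Gamma_add_one hy.ne', Real.log_mul hy.ne' (Real.Gamma_pos_of_pos hy).ne',
        add_comm]) hx hn

theorem norm_GammaSeq_le_realGammaSeq (hs : 0 < s.re) (hn : n ≠ 0) :
    ‖GammaSeq s n‖ ≤ Real.GammaSeq s.re n := by
  rw [GammaSeq, Real.GammaSeq, norm_div, norm_mul, norm_prod,
    norm_natCast_cpow_of_pos (Nat.pos_of_ne_zero hn), norm_natCast]
  gcongr with j
  simpa using re_le_norm (s + j)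

theorem add_natCast_ne_zero (hs : ∀ m : ℕ, s ≠ -m) (j : ℕ) : s + j ≠ 0 :=
  fun h ↦ hs j (eq_neg_of_add_eq_zero_left h)

theorem differentiableAt_GammaSeq (hs : ∀ m : ℕ, s ≠ -m) (hn : n ≠ 0) :
    DifferentiableAt ℂ (GammaSeq · n) s := by
  unfold GammaSeq
  have hn' : (n : ℂ) ≠ 0 := Nat.cast_ne_zero.mpr hn
  exact ((differentiableAt_id.const_cpow (.inl hn')).mul_const _).div (by fun_prop)
    (Finset.prod_ne_zero_iff.mpr fun j _ ↦ add_natCast_ne_zero hs j)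

theorem tendsto_deriv_GammaSeq_of_re_pos (hs : 0 < s.re) :
    Tendsto (fun n ↦ deriv (GammaSeq · n) s) atTop (𝓝 (deriv Gamma s)) := by
  have hU : IsOpen {w : ℂ | 0 < w.re} := isOpen_lt continuous_const continuous_re
  obtain ⟨r, hr, hsr⟩ := nhds_basis_closedBall.mem_iff.mp (hU.mem_nhds hs)
  have hsphere : sphere s r ⊆ {w : ℂ | 0 < w.re} := sphere_subset_closedBall.trans hsr
  have hbound : ContinuousOn (fun w : ℂ ↦ Real.Gamma w.re) (sphere s r) :=
    Real.differentiableOn_Gamma_Ioi.continuousOn.comp continuous_re.continuousOn hsphere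
  refine tendsto_deriv_of_dominated_on_sphere hU hr hsr ?_ ?_ ?_
    (hbound.circleIntegrable hr.le) fun w _ ↦ GammaSeq_tendsto_Gamma w
  · filter_upwards [eventually_ne_atTop 0] with n hn w hw
    exact (differentiableAt_GammaSeq (ne_neg_natCast_of_re_pos hw) hn).differentiableWithinAt
  · exact fun w hw ↦
      (differentiableAt_Gamma w (ne_neg_natCast_of_re_pos hw)).differentiableWithinAt
  · filter_upwards [eventually_ne_atTop 0] with n hn w hw
    exact (norm_GammaSeq_le_realGammaSeq (hsphere hw) hn).trans
      (realGammaSeq_le_Gamma (hsphere hw) hn)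

end EulerSequence

section Digamma

variable {s : ℂ}

/-- The partial sums `log n - ∑ j ≤ n, 1 / (s + j)` of Gauss' limit formula for the digamma
function: the logarithmic derivatives of Euler's approximations `Complex.GammaSeq`. -/
noncomputable def digammaSeq (s : ℂ) (n : ℕ) : ℂ :=
  log n - ∑ j ∈ Finset.range (n + 1), (s + j)⁻¹

theorem logDeriv_GammaSeq (hs : ∀ m : ℕ, s ≠ -m) {n : ℕ} (hn : n ≠ 0) :
    logDeriv (GammaSeq · n) s = digammaSeq s n := by
  have hn' : (n : ℂ) ≠ 0 := Nat.cast_ne_zero.mpr hn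
  have hpow : HasDerivAt (fun w : ℂ ↦ (n : ℂ) ^ w) ((n : ℂ) ^ s * log n) s := by
    simpa using (hasDerivAt_id s).const_cpow (c := (n : ℂ)) (.inl hn')
  have hpow_ne : (n : ℂ) ^ s ≠ 0 := by simp [cpow_eq_zero_iff, hn']
  have hfact : (n.factorial : ℂ) ≠ 0 := Nat.cast_ne_zero.mpr n.factorial_ne_zero
  have hfactor : ∀ j ∈ Finset.range (n + 1), s + j ≠ 0 := fun j _ ↦ add_natCast_ne_zero hs j
  have hnum : logDeriv (fun w : ℂ ↦ (n : ℂ) ^ w * n.factorial) s = log n := by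
    rw [logDeriv_mul_const s _ hfact, logDeriv_apply, hpow.deriv, mul_div_cancel_left₀ _ hpow_ne]
  have hden : logDeriv (fun w : ℂ ↦ ∏ j ∈ Finset.range (n + 1), (w + j)) s =
      ∑ j ∈ Finset.range (n + 1), (s + j)⁻¹ := by
    rw [logDeriv_prod (f := fun (j : ℕ) (w : ℂ) ↦ w + j) hfactor fun j _ ↦ by fun_prop]
    simp [logDeriv_apply]
  rw [digammaSeq, ← hnum, ← hden]
  exact logDeriv_div s (mul_ne_zero hpow_ne hfact) (Finset.prod_ne_zero_iff.mpr hfactor)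
    (hpow.differentiableAt.mul_const _) (by fun_prop)

theorem digammaSeq_add_one (s : ℂ) (n : ℕ) :
    digammaSeq (s + 1) n = digammaSeq s n + s⁻¹ - (s + 1 + n)⁻¹ := by
  have hshift : ∑ j ∈ Finset.range n, (s + (j + 1 : ℕ))⁻¹ =
      ∑ j ∈ Finset.range n, (s + 1 + j)⁻¹ :=
    Finset.sum_congr rfl fun j _ ↦ by push_cast; ring
  rw [digammaSeq, digammaSeq, Finset.sum_range_succ, Finset.sum_range_succ', hshift,
    Nat.cast_zero, add_zero]
  ring

theorem tendsto_digammaSeq_of_re_pos (hs : 0 < s.re) :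
    Tendsto (digammaSeq s) atTop (𝓝 (digamma s)) := by
  refine ((tendsto_deriv_GammaSeq_of_re_pos hs).div (GammaSeq_tendsto_Gamma s)
    (Gamma_ne_zero_of_re_pos hs)).congr' ?_
  filter_upwards [eventually_ne_atTop 0] with n hn
    using logDeriv_GammaSeq (ne_neg_natCast_of_re_pos hs) hn

theorem tendsto_digammaSeq_of_add_one (hs : ∀ m : ℕ, s ≠ -m)
    (h : Tendsto (digammaSeq (s + 1)) atTop (𝓝 (digamma (s + 1)))) :
    Tendsto (digammaSeq s) atTop (𝓝 (digamma s)) := by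
  have hinv : Tendsto (fun n : ℕ ↦ (s + 1 + n)⁻¹) atTop (𝓝 0) :=
    tendsto_inv₀_cobounded.comp
      ((tendsto_const_add_cobounded (s + 1)).comp tendsto_natCast_atTop_cobounded)
  have hlim : Tendsto (fun n ↦ digammaSeq (s + 1) n - s⁻¹ + (s + 1 + n)⁻¹) atTop
      (𝓝 (digamma (s + 1) - s⁻¹ + 0)) := (h.sub_const _).add hinv
  rw [digamma_apply_add_one s hs, add_sub_cancel_right, add_zero] at hlim
  refine hlim.congr fun n ↦ ?_
  rw [digammaSeq_add_one]
  ring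

theorem tendsto_digammaSeq (hs : ∀ m : ℕ, s ≠ -m) :
    Tendsto (digammaSeq s) atTop (𝓝 (digamma s)) := by
  obtain ⟨k, hk⟩ := exists_nat_gt (-s.re)
  induction k generalizing s with
  | zero => exact tendsto_digammaSeq_of_re_pos (by simpa using hk)
  | succ k ih =>
    refine tendsto_digammaSeq_of_add_one hs (ih (fun m h ↦ hs (m + 1) ?_) ?_)
    · rw [eq_sub_of_add_eq h]
      push_cast
      ring
    · push_cast at hk
      rw [add_re, one_re]
      linarith

end Digamma

section ImaginaryPart

variable {z : ℂ} {γ : ℝ}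

theorem ne_neg_natCast_of_im_ne_zero (hz : z.im ≠ 0) (m : ℕ) : z ≠ -m := by
  rintro rfl
  simp at hz

theorem im_inv_lt_im_inv_add_ofReal (hγ : 0 < γ) (hre : -γ < 2 * z.re) (him : 0 < z.im) :
    (z⁻¹).im < ((z + γ)⁻¹).im := by
  have hnormSq : normSq z < normSq (z + γ) := by
    simp only [normSq_apply, add_re, add_im, ofReal_re, ofReal_im, add_zero]
    nlinarith [mul_pos hγ (neg_lt_iff_pos_add.mp hre)]
  have hpos : 0 < normSq z := normSq_pos.mpr fun h ↦ by simp [h] at him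
  rw [inv_im, inv_im, add_im, ofReal_im, add_zero, neg_div, neg_div, neg_lt_neg_iff]
  gcongr

theorem im_digammaSeq_add_ofReal_le (hγ : 0 < γ) (hre : -γ < 2 * z.re) (him : 0 < z.im) (n : ℕ) :
    (digammaSeq (z + γ) n).im ≤ (digammaSeq z n).im := by
  simp only [digammaSeq, sub_im, im_sum]
  gcongr with j
  rw [add_right_comm]
  refine (im_inv_lt_im_inv_add_ofReal hγ ?_ (by simpa using him)).le
  rw [add_re, natCast_re]
  linarith [j.cast_nonneg (α := ℝ)]

theorem im_digamma_add_ofReal_le (hγ : 0 < γ) (hre : -γ < 2 * z.re) (him : 0 < z.im) :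
    (digamma (z + γ)).im ≤ (digamma z).im := by
  have hlim {w : ℂ} (hw : 0 < w.im) :
      Tendsto (fun n ↦ (digammaSeq w n).im) atTop (𝓝 (digamma w).im) :=
    (continuous_im.tendsto _).comp (tendsto_digammaSeq (ne_neg_natCast_of_im_ne_zero hw.ne'))
  exact le_of_tendsto_of_tendsto' (hlim (by simpa using him)) (hlim him)
    (im_digammaSeq_add_ofReal_le hγ hre him)

end ImaginaryPart

-- Passing to the limit loses strictness; the recurrence `ψ z = ψ (z + 1) - 1 / z` restores it.
theorem stmt5_general {γ : ℝ} (hγ : 0 < γ) {z : ℂ} (hre : -γ < 2 * z.re) (him : 0 < z.im) :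
    (digamma (z + γ) - digamma z).im < 0 := by
  have him' : 0 < (z + γ).im := by simpa using him
  have hshift : (digamma (z + γ + 1)).im ≤ (digamma (z + 1)).im := by
    rw [add_right_comm]
    refine im_digamma_add_ofReal_le hγ ?_ (by simpa using him)
    rw [add_re, one_re]
    linarith
  rw [digamma_apply_add_one _ (ne_neg_natCast_of_im_ne_zero him.ne'),
    digamma_apply_add_one _ (ne_neg_natCast_of_im_ne_zero him'.ne'), add_im, add_im] at hshift
  rw [sub_im]
  linarith [im_inv_lt_im_inv_add_ofReal hγ hre him]

theorem stmt5 (γ : ℝ) (hγ : 0 < γ) (z : ℂ) (hre : 0 < z.re) (him : 0 < z.im) :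
    (deriv Complex.Gamma (z + (γ : ℂ)) / Complex.Gamma (z + (γ : ℂ)) -
        deriv Complex.Gamma z / Complex.Gamma z).im < 0 :=
  stmt5_general hγ (by linarith) him
end

section
/- For every integer n ≥ 4 there exists a unique real number c with 0 < c < n/2 − 1 such that for all real γ with 0 < γ < n/2 − 1, the inequality Ξ(n,γ) < ((n+2γ)/(n−2γ)) · Q(n,γ) holds if and only if γ < c. -/
/-- `Ξ(n,γ) = 4^γ · Γ(n/4+γ/2−1/4)² / Γ(n/4−γ/2−1/4)²`. -/
noncomputable def Xi (n : ℤ) (γ : ℝ) : ℝ :=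
  (4 : ℝ) ^ γ * Real.Gamma ((n : ℝ) / 4 + γ / 2 - 1 / 4) ^ 2 /
    Real.Gamma ((n : ℝ) / 4 - γ / 2 - 1 / 4) ^ 2

/-- The fractional curvature `Q_γ(n,1)` of the trivial solution on `Sⁿ∖S¹`. -/
noncomputable def Qcurv (n : ℤ) (γ : ℝ) : ℝ :=
  (4 : ℝ) ^ γ * Real.Gamma (((n : ℝ) + 2 * γ) / 4) * Real.Gamma (((n : ℝ) - 2 + 2 * γ) / 4) /
    (Real.Gamma (((n : ℝ) - 2 * γ) / 4) * Real.Gamma (((n : ℝ) - 2 - 2 * γ) / 4))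

/-! Write `d` for the dimension and put `M = (d - 1) / 4`, `t = γ / 2` and
`f x = log (Γ (x + 5/4) Γ (x - 1/4) / Γ x ^ 2)`. At `x = M ± t` the factor `(d + 2γ) / (d - 2γ)`
turns `Γ (x + 1/4)` into `Γ (x + 5/4)`, so the inequality says `f (M - t) < f (M + t)`. Gauss's
product gives `f x = lim (log N - ∑ m ≤ N, φ (x + m))`, where `φ` is the logarithm of a rational
function that decreases beyond its critical point `5/8`. Three facts follow: `f` is strictly
increasing on `[5/8, ∞)`, it tends to `∞` at `1/4`, and `f'' x = -∑ φ'' (x + m)` is at least `1/2`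
on `(1/4, 5/8]` but at most `1/2` on `[7/8, ∞)`. Hence `t ↦ f (M + t) - f (M - t)` is positive as
long as `M - t ≥ 5/8`, and from then on it is concave and eventually negative, so it changes sign
exactly once. -/

open Filter Finset Real Set Topology

section OrderAndConvexity

theorem existsUnique_forall_iff_lt {α : Type*} [LinearOrder α] {a b : α} {P : α → Prop}
    (h : ∃ c, a < c ∧ c < b ∧ ∀ x, a < x → x < b → (P x ↔ x < c)) :
    ∃! c, a < c ∧ c < b ∧ ∀ x, a < x → x < b → (P x ↔ x < c) := by
  obtain ⟨c, hac, hcb, hc⟩ := h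
  refine ⟨c, ⟨hac, hcb, hc⟩, fun d ⟨had, hdb, hd⟩ => le_antisymm ?_ ?_⟩
  · exact not_lt.1 fun hcd => lt_irrefl c <| (hc c hac hcb).1 <| (hd c hac hcb).2 hcd
  · exact not_lt.1 fun hdc => lt_irrefl d <| (hd d had hdb).1 <| (hc d had hdb).2 hdc

theorem concaveOn_of_tendsto {ι E : Type*} [AddCommMonoid E] [Module ℝ E] {l : Filter ι} [l.NeBot]
    {s : Set E} {F : ι → E → ℝ} {f : E → ℝ} (hF : ∀ i, ConcaveOn ℝ s (F i))
    (hlim : ∀ x ∈ s, Tendsto (fun i => F i x) l (𝓝 (f x))) : ConcaveOn ℝ s f := by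
  obtain ⟨i⟩ := l.nonempty_of_neBot
  have hs : Convex ℝ s := (hF i).1
  exact ⟨hs, fun x hx y hy _ _ ha hb hab =>
    le_of_tendsto_of_tendsto' (((hlim x hx).const_smul _).add ((hlim y hy).const_smul _))
      (hlim _ (hs hx hy ha hb hab)) fun i => (hF i).2 hx hy ha hb hab⟩

theorem exists_pos_iff_lt_of_concaveOn {a b : ℝ} {h : ℝ → ℝ} (hconc : ConcaveOn ℝ (Ico a b) h)
    (hcont : ContinuousOn h (Ico a b)) (ha : 0 < h a) (hneg : ∃ u ∈ Ioo a b, h u < 0) :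
    ∃ c ∈ Ioo a b, ∀ t ∈ Ico a b, 0 < h t ↔ t < c := by
  obtain ⟨u, ⟨hau, hub⟩, hu⟩ := hneg
  obtain ⟨c, ⟨hac, hcu⟩, hc⟩ : 0 ∈ h '' Ioo a u :=
    intermediate_value_Ioo' hau.le (hcont.mono (Icc_subset_Ico_right hub)) ⟨hu, ha⟩
  have ha_mem : a ∈ Ico a b := ⟨le_rfl, hau.trans hub⟩
  have hc_mem : c ∈ Ico a b := ⟨hac.le, hcu.trans hub⟩
  refine ⟨c, ⟨hac, hcu.trans hub⟩, fun t ht => ⟨fun hpos => ?_, fun htc => ?_⟩⟩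
  · by_contra! hct
    have hct : c < t := hct.lt_of_ne (by rintro rfl; exact hpos.ne' hc)
    have hc_seg : c ∈ openSegment ℝ a t := by
      rw [openSegment_eq_Ioo (hac.trans hct)]; exact ⟨hac, hct⟩
    have := hconc.lt_right_of_left_lt ha_mem ht hc_seg (hc.trans_lt ha)
    linarith
  · by_contra! hnonpos
    have hat : a < t := ht.1.lt_of_ne (by rintro rfl; exact hnonpos.not_gt ha)
    have ht_seg : t ∈ openSegment ℝ a c := by
      rw [openSegment_eq_Ioo hac]; exact ⟨hat, htc⟩
    have := hconc.lt_right_of_left_lt ha_mem hc_mem ht_seg (hnonpos.trans_lt ha)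
    linarith

end OrderAndConvexity

section LogQuot

/-- The increment `φ x = f (x + 1) - f x` of `f = logGammaQuot`; the formula comes from
`Γ (x + 1) = x Γ x`. -/
noncomputable def logQuot (x : ℝ) : ℝ :=
  log (x + 5 / 4) + log (x - 1 / 4) - 2 * log x

/-- The derivative `φ'` of `logQuot` on `(1/4, ∞)`. -/
noncomputable def logQuotDeriv (x : ℝ) : ℝ :=
  (x + 5 / 4)⁻¹ + (x - 1 / 4)⁻¹ - 2 * x⁻¹

/-- The second derivative `φ''` of `logQuot` on `(1/4, ∞)`. -/
noncomputable def logQuotDerivTwo (x : ℝ) : ℝ :=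
  2 / x ^ 2 - 1 / (x + 5 / 4) ^ 2 - 1 / (x - 1 / 4) ^ 2

variable {x : ℝ}

theorem hasDerivAt_logQuot (hx : 1 / 4 < x) : HasDerivAt logQuot (logQuotDeriv x) x := by
  have h₁ := (hasDerivAt_log (x := x + 5 / 4) (by linarith)).comp_add_const x (5 / 4)
  have h₂ := (hasDerivAt_log (x := x - 1 / 4) (by linarith)).comp_sub_const x (1 / 4)
  have h₃ := (hasDerivAt_log (x := x) (by linarith)).const_mul 2
  exact (h₁.add h₂).sub h₃

theorem hasDerivAt_logQuotDeriv (hx : 1 / 4 < x) :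
    HasDerivAt logQuotDeriv (logQuotDerivTwo x) x := by
  have h₁ := (hasDerivAt_inv (x := x + 5 / 4) (by linarith)).comp_add_const x (5 / 4)
  have h₂ := (hasDerivAt_inv (x := x - 1 / 4) (by linarith)).comp_sub_const x (1 / 4)
  have h₃ := (hasDerivAt_inv (x := x) (by linarith)).const_mul 2
  refine ((h₁.add h₂).sub h₃).congr_deriv ?_
  unfold logQuotDerivTwo
  ring

theorem logQuotDeriv_neg (hx : 5 / 8 < x) : logQuotDeriv x < 0 := by
  have h₀ : 0 < x := by linarith
  have : 0 < x + 5 / 4 := by linarith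
  have h₂ : 0 < x - 1 / 4 := by linarith
  have : 0 < x - 5 / 8 := by linarith
  have factored : logQuotDeriv x = -((x - 5 / 8) / (x * (x + 5 / 4) * (x - 1 / 4))) := by
    rw [eq_neg_iff_add_eq_zero, logQuotDeriv]
    have h₁' : x * 4 + 5 ≠ 0 := by linarith
    have h₂' : x * 4 - 1 ≠ 0 := by linarith
    field_simp
    ring
  rw [factored, neg_lt_zero]
  positivity

theorem strictAntiOn_logQuot : StrictAntiOn logQuot (Ici (5 / 8)) := by
  have hderiv : ∀ y ∈ Ici (5 / 8 : ℝ), HasDerivAt logQuot (logQuotDeriv y) y := fun y hy =>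
    hasDerivAt_logQuot (lt_of_lt_of_le (by norm_num) hy)
  refine strictAntiOn_of_deriv_neg (convex_Ici _)
    (fun y hy => (hderiv y hy).continuousAt.continuousWithinAt) fun y hy => ?_
  rw [(hderiv y (interior_subset hy)).deriv]
  rw [interior_Ici] at hy
  exact logQuotDeriv_neg hy

theorem logQuotDerivTwo_le_of_le (h₁ : 1 / 4 < x) (h₂ : x ≤ 5 / 8) :
    logQuotDerivTwo x ≤ -(7 / 4) := by
  have : 0 < x - 1 / 4 := by linarith
  have hfirst : 0 ≤ 1 / (x + 5 / 4) ^ 2 := by positivity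
  have hsecond : 25 / 9 / x ^ 2 ≤ 1 / (x - 1 / 4) ^ 2 := by
    calc 25 / 9 / x ^ 2 = 1 / (3 / 5 * x) ^ 2 := by ring
      _ ≤ 1 / (x - 1 / 4) ^ 2 := by gcongr; linarith
  have hinv : 1 / (5 / 8) ^ 2 ≤ 1 / x ^ 2 := by gcongr
  calc logQuotDerivTwo x ≤ 2 / x ^ 2 - 25 / 9 / x ^ 2 := by unfold logQuotDerivTwo; linarith
    _ = -(7 / 9) * (1 / x ^ 2) := by ring
    _ ≤ -(7 / 4) := by linarith

theorem neg_half_le_logQuotDerivTwo (hx : 7 / 8 ≤ x) : -(1 / 2) ≤ logQuotDerivTwo x := by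
  have hfirst : 1 / (x + 5 / 4) ^ 2 ≤ 1 / 2 ^ 2 := by gcongr; linarith
  have hsecond : 1 / (x - 1 / 4) ^ 2 ≤ 49 / 25 / x ^ 2 := by
    calc 1 / (x - 1 / 4) ^ 2 ≤ 1 / (5 / 7 * x) ^ 2 := by gcongr; linarith
      _ = 49 / 25 / x ^ 2 := by ring
  have hmain : 49 / 25 / x ^ 2 ≤ 2 / x ^ 2 := by gcongr; norm_num
  unfold logQuotDerivTwo
  linarith

theorem logQuotDerivTwo_nonneg (hx : 1 ≤ x) : 0 ≤ logQuotDerivTwo x := by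
  obtain ⟨s, hs, rfl⟩ : ∃ s, 0 ≤ s ∧ x = s + 1 := ⟨x - 1, by linarith, by ring⟩
  have : 0 < s + 1 - 1 / 4 := by linarith
  rw [logQuotDerivTwo, sub_sub, sub_nonneg, div_add_div _ _ (by positivity) (by positivity),
    div_le_div_iff₀ (by positivity) (by positivity), ← sub_nonneg]
  -- Expanded in powers of `s = x - 1`, the difference of the two sides has positive coefficients.
  ring_nf
  positivity

theorem logQuotDerivTwo_le_sub (hx : 1 / 4 < x) :
    logQuotDerivTwo x ≤
      (1 / x ^ 2 + 1 / (x + 1) ^ 2) - (1 / (x + 1) ^ 2 + 1 / (x + 2) ^ 2) := by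
  have : 0 < x - 1 / 4 := by linarith
  have hfirst : 1 / (x + 2) ^ 2 ≤ 1 / (x + 5 / 4) ^ 2 := by gcongr; norm_num
  have hsecond : 1 / x ^ 2 ≤ 1 / (x - 1 / 4) ^ 2 := by gcongr; linarith
  have htwo : 2 / x ^ 2 = 1 / x ^ 2 + 1 / x ^ 2 := by ring
  unfold logQuotDerivTwo
  linarith

theorem sum_logQuotDerivTwo_shift_le (hx : 1 ≤ x) (N : ℕ) :
    ∑ m ∈ range N, logQuotDerivTwo (x + m) ≤ 5 / 4 := by
  set T : ℕ → ℝ := fun m => 1 / (x + m) ^ 2 + 1 / (x + m + 1) ^ 2 with hT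
  calc ∑ m ∈ range N, logQuotDerivTwo (x + m) ≤ ∑ m ∈ range N, (T m - T (m + 1)) := by
        refine sum_le_sum fun m _ => ?_
        have : (0 : ℝ) ≤ m := m.cast_nonneg
        have hstep := logQuotDerivTwo_le_sub (x := x + m) (by linarith)
        simp only [hT, Nat.cast_succ, ← add_assoc]
        rwa [add_assoc (x + m) 1 1, one_add_one_eq_two]
    _ = T 0 - T N := sum_range_sub' T N
    _ ≤ T 0 := sub_le_self _ (by positivity)
    _ = 1 / x ^ 2 + 1 / (x + 1) ^ 2 := by simp [hT]
    _ ≤ 1 / 1 ^ 2 + 1 / 2 ^ 2 := by gcongr; linarith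
    _ = 5 / 4 := by norm_num

theorem sum_logQuotDerivTwo_le (h₁ : 1 / 4 < x) (h₂ : x ≤ 5 / 8) (N : ℕ) :
    ∑ m ∈ range (N + 1), logQuotDerivTwo (x + m) ≤ -(1 / 2) := by
  have hfirst := logQuotDerivTwo_le_of_le h₁ h₂
  have hrest := sum_logQuotDerivTwo_shift_le (x := x + 1) (by linarith) N
  rw [sum_range_succ', Nat.cast_zero, add_zero]
  simp only [Nat.cast_succ, add_comm (Nat.cast _) (1 : ℝ), ← add_assoc]
  linarith

theorem neg_half_le_sum_logQuotDerivTwo (hx : 7 / 8 ≤ x) (N : ℕ) :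
    -(1 / 2) ≤ ∑ m ∈ range (N + 1), logQuotDerivTwo (x + m) := by
  have hfirst := neg_half_le_logQuotDerivTwo hx
  have hrest : 0 ≤ ∑ m ∈ range N, logQuotDerivTwo (x + (m + 1 : ℕ)) :=
    sum_nonneg fun m _ => logQuotDerivTwo_nonneg (by push_cast; linarith [m.cast_nonneg (α := ℝ)])
  rw [sum_range_succ', Nat.cast_zero, add_zero]
  linarith

theorem hasDerivAt_sum_add_natCast {φ φ' : ℝ → ℝ} {N : ℕ}
    (h : ∀ m : ℕ, HasDerivAt φ (φ' (x + m)) (x + m)) :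
    HasDerivAt (fun y => ∑ m ∈ range N, φ (y + m)) (∑ m ∈ range N, φ' (x + m)) x :=
  HasDerivAt.fun_sum fun m _ => (h m).comp_add_const x m

theorem concaveOn_sum_logQuot_sub {M : ℝ} (hM : 3 / 4 ≤ M) (N : ℕ) :
    ConcaveOn ℝ (Ico (M - 5 / 8) (M - 1 / 4)) fun t =>
      ∑ m ∈ range (N + 1), logQuot (M - t + m) - ∑ m ∈ range (N + 1), logQuot (M + t + m) := by
  have hS : ∀ y : ℝ, 1 / 4 < y → HasDerivAt (fun y => ∑ m ∈ range (N + 1), logQuot (y + m))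
      (∑ m ∈ range (N + 1), logQuotDeriv (y + m)) y := fun y hy =>
    hasDerivAt_sum_add_natCast fun m => hasDerivAt_logQuot (by linarith [m.cast_nonneg (α := ℝ)])
  have hS' : ∀ y : ℝ, 1 / 4 < y → HasDerivAt (fun y => ∑ m ∈ range (N + 1), logQuotDeriv (y + m))
      (∑ m ∈ range (N + 1), logQuotDerivTwo (y + m)) y := fun y hy =>
    hasDerivAt_sum_add_natCast fun m =>
      hasDerivAt_logQuotDeriv (by linarith [m.cast_nonneg (α := ℝ)])
  have hD : ∀ t ∈ Ico (M - 5 / 8) (M - 1 / 4), HasDerivAt _ _ t := fun t ht =>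
    ((hS (M - t) (by linarith [ht.2])).comp_const_sub M t).sub
      ((hS (M + t) (by linarith [ht.1])).comp_const_add M t)
  have hD' : ∀ t ∈ Ico (M - 5 / 8) (M - 1 / 4), HasDerivAt _ _ t := fun t ht =>
    ((hS' (M - t) (by linarith [ht.2])).comp_const_sub M t).neg.sub
      ((hS' (M + t) (by linarith [ht.1])).comp_const_add M t)
  refine concaveOn_of_hasDerivWithinAt2_nonpos (convex_Ico _ _)
    (fun t ht => (hD t ht).continuousAt.continuousWithinAt)
    (fun t ht => (hD t (interior_subset ht)).hasDerivWithinAt)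
    (fun t ht => (hD' t (interior_subset ht)).hasDerivWithinAt) fun t ht => ?_
  obtain ⟨h₁, h₂⟩ := interior_subset ht
  have hleft := sum_logQuotDerivTwo_le (x := M - t) (by linarith) (by linarith) N
  have hright := neg_half_le_sum_logQuotDerivTwo (x := M + t) (by linarith) N
  linarith

end LogQuot

section LogGammaQuot

/-- The function `f x = log (Γ (x + 5/4) Γ (x - 1/4) / Γ x ^ 2)` on `(1/4, ∞)`, through which
condition (5.4) is compared at `(d - 1) / 4 - γ / 2` and `(d - 1) / 4 + γ / 2`. -/
noncomputable def logGammaQuot (x : ℝ) : ℝ :=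
  log (Gamma (x + 5 / 4)) + log (Gamma (x - 1 / 4)) - 2 * log (Gamma x)

variable {x : ℝ}

theorem log_Gamma_add_one (hx : 0 < x) : log (Gamma (x + 1)) = log x + log (Gamma x) := by
  rw [Gamma_add_one hx.ne', log_mul hx.ne' (Gamma_pos_of_pos hx).ne']

theorem continuousOn_logGammaQuot : ContinuousOn logGammaQuot (Ioi (1 / 4)) := by
  have hlog : ContinuousOn (fun y => log (Gamma y)) (Ioi 0) :=
    differentiableOn_Gamma_Ioi.continuousOn.log fun y hy => (Gamma_pos_of_pos hy).ne'
  have hcomp : ∀ k : ℝ, -(1 / 4) ≤ k →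
      ContinuousOn (fun y => log (Gamma (y + k))) (Ioi (1 / 4)) := fun k hk =>
    hlog.comp (by fun_prop) fun y (hy : 1 / 4 < y) => show 0 < y + k by linarith
  have h₃ := hcomp 0 (by norm_num)
  simp only [add_zero] at h₃
  exact ((hcomp (5 / 4) (by norm_num)).add (hcomp (-(1 / 4)) le_rfl)).sub (h₃.const_mul 2)

theorem logGammaQuot_add_one (hx : 1 / 4 < x) :
    logGammaQuot (x + 1) = logGammaQuot x + logQuot x := by
  have h₁ := log_Gamma_add_one (x := x + 5 / 4) (by linarith)
  have h₂ := log_Gamma_add_one (x := x - 1 / 4) (by linarith)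
  have h₃ := log_Gamma_add_one (x := x) (by linarith)
  rw [add_right_comm] at h₁
  rw [sub_add_eq_add_sub] at h₂
  unfold logGammaQuot logQuot
  linarith

theorem tendsto_logGammaQuot_nhdsGT : Tendsto logGammaQuot (𝓝[>] (1 / 4)) atTop := by
  have hrest : ContinuousAt (fun x => logGammaQuot (x + 1) - log (x + 5 / 4) + 2 * log x)
      (1 / 4) := by
    have : ContinuousAt (fun x => logGammaQuot (x + 1)) (1 / 4) :=
      ContinuousAt.comp (f := fun x => x + 1) (continuousOn_logGammaQuot.continuousAt
        (Ioi_mem_nhds (by norm_num))) (by fun_prop)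
    fun_prop (disch := norm_num)
  have hsub : Tendsto (fun x : ℝ => x - 1 / 4) (𝓝[>] (1 / 4)) (𝓝[>] 0) := by
    have hcont : ContinuousWithinAt (fun x : ℝ => x - 1 / 4) (Ioi (1 / 4)) (1 / 4) := by fun_prop
    simpa using hcont.tendsto_nhdsWithin fun x (hx : 1 / 4 < x) =>
      show x - 1 / 4 ∈ Set.Ioi 0 from sub_pos.2 hx
  have hpole : Tendsto (fun x : ℝ => -log (x - 1 / 4)) (𝓝[>] (1 / 4)) atTop :=
    tendsto_neg_atBot_atTop.comp (tendsto_log_nhdsGT_zero.comp hsub)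
  refine ((hrest.tendsto.mono_left nhdsWithin_le_nhds).add_atTop hpole).congr' ?_
  filter_upwards [self_mem_nhdsWithin] with x hx
  rw [logGammaQuot_add_one hx, logQuot]
  ring

theorem tendsto_log_sub_sum_logQuot (hx : 1 / 4 < x) :
    Tendsto (fun N : ℕ => log N - ∑ m ∈ range (N + 1), logQuot (x + m)) atTop
      (𝓝 (logGammaQuot x)) := by
  have hlim := ((BohrMollerup.tendsto_log_gamma (x := x + 5 / 4) (by linarith)).add
    (BohrMollerup.tendsto_log_gamma (x := x - 1 / 4) (by linarith))).sub
    ((BohrMollerup.tendsto_log_gamma (x := x) (by linarith)).const_mul 2)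
  refine hlim.congr fun N => ?_
  simp only [BohrMollerup.logGammaSeq, logQuot, sum_sub_distrib, sum_add_distrib, ← mul_sum,
    add_right_comm x _ (5 / 4), add_sub_right_comm x _ (1 / 4)]
  ring

theorem tendsto_sum_logQuot_sub {y : ℝ} (hx : 1 / 4 < x) (hy : 1 / 4 < y) :
    Tendsto (fun N : ℕ =>
        ∑ m ∈ range (N + 1), logQuot (x + m) - ∑ m ∈ range (N + 1), logQuot (y + m)) atTop
      (𝓝 (logGammaQuot y - logGammaQuot x)) :=
  ((tendsto_log_sub_sum_logQuot hy).sub (tendsto_log_sub_sum_logQuot hx)).congr fun _ =>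
    sub_sub_sub_cancel_left _ _ _

theorem strictMonoOn_logGammaQuot : StrictMonoOn logGammaQuot (Ici (5 / 8)) := by
  intro x (hx : 5 / 8 ≤ x) y _ hxy
  have hterm : ∀ m : ℕ, 0 < logQuot (x + m) - logQuot (y + m) := fun m => by
    have : (0 : ℝ) ≤ m := m.cast_nonneg
    exact sub_pos.2 <| strictAntiOn_logQuot (show 5 / 8 ≤ x + m by linarith)
      (show 5 / 8 ≤ y + m by linarith) (by linarith)
  have hfirst : logQuot (x + (0 : ℕ)) - logQuot (y + (0 : ℕ)) ≤
      logGammaQuot y - logGammaQuot x := by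
    refine ge_of_tendsto' (tendsto_sum_logQuot_sub (by linarith) (by linarith)) fun N => ?_
    rw [← sum_sub_distrib]
    exact single_le_sum (f := fun m : ℕ => logQuot (x + m) - logQuot (y + m))
      (fun m _ => (hterm m).le) (by simp)
  exact sub_pos.1 ((hterm 0).trans_le hfirst)

theorem concaveOn_logGammaQuot_sub {M : ℝ} (hM : 3 / 4 ≤ M) :
    ConcaveOn ℝ (Ico (M - 5 / 8) (M - 1 / 4)) fun t =>
      logGammaQuot (M + t) - logGammaQuot (M - t) :=
  concaveOn_of_tendsto (concaveOn_sum_logQuot_sub hM) fun t ht =>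
    tendsto_sum_logQuot_sub (by linarith [ht.2]) (by linarith [ht.1])

theorem exists_logGammaQuot_lt {M : ℝ} (hM : 5 / 8 ≤ M) :
    ∃ t ∈ Ioo (M - 5 / 8) (M - 1 / 4), logGammaQuot (M + t) < logGammaQuot (M - t) := by
  obtain ⟨x, hlarge, hx₁, hx₂⟩ :=
    ((tendsto_logGammaQuot_nhdsGT.eventually_gt_atTop (logGammaQuot (2 * M))).and
      (Ioo_mem_nhdsGT (show (1 / 4 : ℝ) < 5 / 8 by norm_num))).exists
  have hmono : logGammaQuot (M + (M - x)) < logGammaQuot (2 * M) :=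
    strictMonoOn_logGammaQuot (show 5 / 8 ≤ M + (M - x) by linarith)
      (show 5 / 8 ≤ 2 * M by linarith) (by linarith)
  refine ⟨M - x, ⟨by linarith, by linarith⟩, ?_⟩
  rw [sub_sub_cancel]
  exact hmono.trans hlarge

theorem exists_logGammaQuot_lt_iff_lt {M : ℝ} (hM : 3 / 4 ≤ M) :
    ∃ c ∈ Ioo 0 (M - 1 / 4), ∀ t ∈ Ioo 0 (M - 1 / 4),
      logGammaQuot (M - t) < logGammaQuot (M + t) ↔ t < c := by
  have hpos : ∀ t, 0 < t → t ≤ M - 5 / 8 → logGammaQuot (M - t) < logGammaQuot (M + t) :=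
    fun t h₀ h₁ => strictMonoOn_logGammaQuot (show 5 / 8 ≤ M - t by linarith)
      (show 5 / 8 ≤ M + t by linarith) (by linarith)
  have hcont : ContinuousOn (fun t => logGammaQuot (M + t) - logGammaQuot (M - t))
      (Ico (M - 5 / 8) (M - 1 / 4)) :=
    (continuousOn_logGammaQuot.comp (by fun_prop) fun t ht =>
        show 1 / 4 < M + t by linarith [ht.1]).sub
      (continuousOn_logGammaQuot.comp (by fun_prop) fun t ht =>
        show 1 / 4 < M - t by linarith [ht.2])
  obtain ⟨t, ht, hneg⟩ := exists_logGammaQuot_lt (M := M) (by linarith)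
  obtain ⟨c, ⟨hc₁, hc₂⟩, hc⟩ := exists_pos_iff_lt_of_concaveOn (concaveOn_logGammaQuot_sub hM)
    hcont (sub_pos.2 (hpos _ (by linarith) le_rfl)) ⟨t, ht, sub_neg.2 hneg⟩
  refine ⟨c, ⟨by linarith, hc₂⟩, fun t ht => ?_⟩
  rcases le_total t (M - 5 / 8) with h | h
  · exact iff_of_true (hpos t ht.1 h) (by linarith)
  · rw [← hc t ⟨h, ht.2⟩, sub_pos]

theorem exp_logGammaQuot (hx : 1 / 4 < x) :
    exp (logGammaQuot x) =
      (x + 1 / 4) * (Gamma (x + 1 / 4) * Gamma (x - 1 / 4)) / Gamma x ^ 2 := by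
  have h₁ : 0 < Gamma (x + 5 / 4) := Gamma_pos_of_pos (by linarith)
  have h₂ : 0 < Gamma (x - 1 / 4) := Gamma_pos_of_pos (by linarith)
  have h₃ : 0 < Gamma x := Gamma_pos_of_pos (by linarith)
  have hshift : Gamma (x + 5 / 4) = (x + 1 / 4) * Gamma (x + 1 / 4) := by
    rw [← Gamma_add_one (by linarith)]
    ring_nf
  rw [logGammaQuot, exp_sub, exp_add, two_mul, exp_add, exp_log h₁, exp_log h₂, exp_log h₃, hshift]
  ring

theorem Gamma_sq_div_lt_iff_logGammaQuot_lt {a b : ℝ} (ha : 1 / 4 < a) (hb : 1 / 4 < b) :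
    Gamma b ^ 2 / Gamma a ^ 2 < (b + 1 / 4) / (a + 1 / 4) *
        (Gamma (b + 1 / 4) * Gamma (b - 1 / 4) / (Gamma (a + 1 / 4) * Gamma (a - 1 / 4))) ↔
      logGammaQuot a < logGammaQuot b := by
  have hsq : ∀ y : ℝ, 1 / 4 < y → 0 < Gamma y ^ 2 := fun y hy =>
    pow_pos (Gamma_pos_of_pos (by linarith)) 2
  have hden : 0 < (a + 1 / 4) * (Gamma (a + 1 / 4) * Gamma (a - 1 / 4)) :=
    mul_pos (by linarith)
      (mul_pos (Gamma_pos_of_pos (by linarith)) (Gamma_pos_of_pos (by linarith)))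
  rw [← exp_lt_exp (x := logGammaQuot a), exp_logGammaQuot ha, exp_logGammaQuot hb,
    ← mul_div_mul_comm, div_lt_div_iff₀ (hsq a ha) hden, div_lt_div_iff₀ (hsq a ha) (hsq b hb),
    mul_comm (Gamma b ^ 2)]

end LogGammaQuot

theorem xi_lt_iff_logGammaQuot_lt {d γ : ℝ} (h₀ : 0 < γ) (h₁ : γ < d / 2 - 1) :
    4 ^ γ * Gamma (d / 4 + γ / 2 - 1 / 4) ^ 2 / Gamma (d / 4 - γ / 2 - 1 / 4) ^ 2 <
        (d + 2 * γ) / (d - 2 * γ) *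
          (4 ^ γ * Gamma ((d + 2 * γ) / 4) * Gamma ((d - 2 + 2 * γ) / 4) /
            (Gamma ((d - 2 * γ) / 4) * Gamma ((d - 2 - 2 * γ) / 4))) ↔
      logGammaQuot ((d - 1) / 4 - γ / 2) < logGammaQuot ((d - 1) / 4 + γ / 2) := by
  have ha : 1 / 4 < (d - 1) / 4 - γ / 2 := by linarith
  have hb : 1 / 4 < (d - 1) / 4 + γ / 2 := by linarith
  have hpow : (0 : ℝ) < 4 ^ γ := by positivity
  have hratio : (d + 2 * γ) / (d - 2 * γ) =
      ((d - 1) / 4 + γ / 2 + 1 / 4) / ((d - 1) / 4 - γ / 2 + 1 / 4) := by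
    rw [← div_div_div_cancel_right₀ (four_ne_zero (α := ℝ))]
    ring_nf
  rw [← Gamma_sq_div_lt_iff_logGammaQuot_lt ha hb, ← hratio]
  refine Iff.trans (iff_of_eq ?_) (mul_lt_mul_iff_right₀ hpow)
  ring_nf

theorem stmt15_general (d : ℝ) (hd : 4 ≤ d) :
    ∃! c : ℝ, 0 < c ∧ c < d / 2 - 1 ∧ ∀ γ : ℝ, 0 < γ → γ < d / 2 - 1 →
      (4 ^ γ * Gamma (d / 4 + γ / 2 - 1 / 4) ^ 2 / Gamma (d / 4 - γ / 2 - 1 / 4) ^ 2 <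
        (d + 2 * γ) / (d - 2 * γ) *
          (4 ^ γ * Gamma ((d + 2 * γ) / 4) * Gamma ((d - 2 + 2 * γ) / 4) /
            (Gamma ((d - 2 * γ) / 4) * Gamma ((d - 2 - 2 * γ) / 4))) ↔ γ < c) := by
  obtain ⟨c, ⟨hc₀, hc₁⟩, hc⟩ := exists_logGammaQuot_lt_iff_lt (M := (d - 1) / 4) (by linarith)
  refine existsUnique_forall_iff_lt ⟨2 * c, by linarith, by linarith, fun γ h₀ h₁ => ?_⟩
  rw [xi_lt_iff_logGammaQuot_lt h₀ h₁, hc (γ / 2) ⟨by linarith, by linarith⟩,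
    div_lt_iff₀' two_pos]

theorem stmt15 (n : ℤ) (hn : 4 ≤ n) :
    ∃! c : ℝ, 0 < c ∧ c < (n : ℝ) / 2 - 1 ∧
      ∀ γ : ℝ, 0 < γ → γ < (n : ℝ) / 2 - 1 →
        (Xi n γ < (((n : ℝ) + 2 * γ) / ((n : ℝ) - 2 * γ)) * Qcurv n γ ↔ γ < c) :=
  stmt15_general n (mod_cast hn)
end
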